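/- Assume σ₂ : ℝ → ℝ is C¹ with σ₂(x + 1/2) = σ₂(x), set M̃_E := max_{x ∈ [0,1/2]} |σ₂'(x)|, and suppose M_I / M̃_E > (3 / ln(13/12)) · (β/α), where M_I := ∫₀¹ |∂_x σ₁(x,0)| dx + ∫₀¹ |∂_x σ₃(x,0)| dx > 0. Let (σ₁, σ₃) be a C² classical solution of the system of weakly nonlinear gas dynamics on ℝ × [0,T], 1-periodic in x, with T ≤ 6/(α M_I), let z* ∈ ℝ satisfy ∂_x σ₁(z*, 0) = − M_I/4, and let x₁(t;z) be the C¹ flow of the 1-characteristic field, i.e. ∂_t x₁(t;z) = α σ₁(x₁(t;z), t), x₁(0;z) = z. Then for all t ∈ [0,T]: − M_I/3 < ∂_z [ σ₁(x₁(t;z*), t) ] < − M_I/6. -/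

import Mathlib

open MeasureTheory Set

/-- Classical solution of the system of weakly nonlinear gas dynamics on
`ℝ × [0,T]`: 1-periodic in `x` and satisfying both equations pointwise
(time derivatives taken within `[0,T]`). -/
def IsClassicalSolution (α β : ℝ) (σ₂ : ℝ → ℝ) (T : ℝ)
    (σ₁ σ₃ : ℝ → ℝ → ℝ) : Prop :=
  (∀ x t, σ₁ (x + 1) t = σ₁ x t) ∧ (∀ x t, σ₃ (x + 1) t = σ₃ x t) ∧
  ∀ x : ℝ, ∀ t ∈ Set.Icc (0 : ℝ) T,
    (derivWithin (fun s => σ₁ x s) (Set.Icc 0 T) t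
        + (α / 2) * deriv (fun y => (σ₁ y t) ^ 2) x
        + (β / 2) * ∫ y in (-1 : ℝ)..1,
            (1 / 2) * deriv σ₂ ((x + y) / 2) * σ₃ y t = 0) ∧
    (derivWithin (fun s => σ₃ x s) (Set.Icc 0 T) t
        - (α / 2) * deriv (fun y => (σ₃ y t) ^ 2) x
        - (β / 2) * ∫ y in (-1 : ℝ)..1,
            (1 / 2) * deriv σ₂ ((x + y) / 2) * σ₁ y t = 0)

/-!
The difference of two solutions of a Burgers equation satisfies a continuity equation with the mean
velocity, so its `L¹` norm grows only through the source term. Here the sources are the nonlocal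
couplings, which are bounded on `L¹`, and Grönwall's inequality shows that the `L¹` distance of two
solutions grows at most like `exp (K t)` with `K = β M̃_E / 2`. Since `(σ₁(x + δ, t), σ₃(x - δ, t))`
is again a solution, dividing by `δ` and letting `δ → 0` bounds the sum of the total variations of
`σ₁` and `σ₃` by `M_I exp (K t)`.

Along the flow, `w = ∂_z[σ₁(x₁)]` and `J = ∂_z x₁` satisfy `J' = α w` and `w' = G J`, where `|G|` is
at most `K` times the total variation of `σ₃`. As long as `-M_I/3 ≤ w ≤ 0`, the bound on `T` gives
`|J| ≤ 1`, hence `|w + M_I/4| ≤ M_I (exp (K t) - 1) < M_I/12`, and a continuity argument closes the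
loop.
-/

open Function (uncurry Periodic)
open Filter (Tendsto)
open intervalIntegral
open scoped Topology

section Calculus

variable {E : Type*} [NormedAddCommGroup E] [NormedSpace ℝ E]

lemma hasDerivAt_left_of_contDiff {f : ℝ → ℝ → E} (hf : ContDiff ℝ 1 (uncurry f)) (x t : ℝ) :
    HasDerivAt (f · t) (deriv (f · t) x) x :=
  (show Differentiable ℝ (f · t) by fun_prop) x |>.hasDerivAt

lemma hasDerivAt_right_of_contDiff {f : ℝ → ℝ → E} (hf : ContDiff ℝ 1 (uncurry f)) (x t : ℝ) :
    HasDerivAt (f x) (deriv (f x) t) t :=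
  (show Differentiable ℝ (f x) by fun_prop) t |>.hasDerivAt

lemma deriv_left_eq_fderiv {f : ℝ → ℝ → E} (hf : ContDiff ℝ 1 (uncurry f)) (x t : ℝ) :
    deriv (f · t) x = fderiv ℝ (uncurry f) (x, t) (1, 0) :=
  ((hf.differentiable one_ne_zero _).hasFDerivAt.comp_hasDerivAt (f := fun y ↦ (y, t)) x
    ((hasDerivAt_id x).prodMk (hasDerivAt_const x t))).deriv

lemma deriv_right_eq_fderiv {f : ℝ → ℝ → E} (hf : ContDiff ℝ 1 (uncurry f)) (x t : ℝ) :
    deriv (f x) t = fderiv ℝ (uncurry f) (x, t) (0, 1) :=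
  ((hf.differentiable one_ne_zero _).hasFDerivAt.comp_hasDerivAt (f := fun s ↦ (x, s)) t
    ((hasDerivAt_const t x).prodMk (hasDerivAt_id t))).deriv

lemma continuous_deriv_left_of_contDiff {f : ℝ → ℝ → E} (hf : ContDiff ℝ 1 (uncurry f)) :
    Continuous (uncurry fun x t ↦ deriv (f · t) x) :=
  ((hf.continuous_fderiv one_ne_zero).clm_apply continuous_const).congr
    fun p ↦ (deriv_left_eq_fderiv hf p.1 p.2).symm

lemma continuous_deriv_right_of_contDiff {f : ℝ → ℝ → E} (hf : ContDiff ℝ 1 (uncurry f)) :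
    Continuous (uncurry fun x t ↦ deriv (f x) t) :=
  ((hf.continuous_fderiv one_ne_zero).clm_apply continuous_const).congr
    fun p ↦ (deriv_right_eq_fderiv hf p.1 p.2).symm

lemma hasDerivAt_along_curve {f : ℝ → ℝ → E} (hf : ContDiff ℝ 1 (uncurry f))
    {X : ℝ → ℝ} {X' t : ℝ} (hX : HasDerivAt X X' t) :
    HasDerivAt (fun s ↦ f (X s) s) (X' • deriv (f · t) (X t) + deriv (f (X t)) t) t := by
  rw [deriv_left_eq_fderiv hf, deriv_right_eq_fderiv hf, ← map_smul, ← map_add]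
  refine ((hf.differentiable one_ne_zero (X t, t)).hasFDerivAt.comp_hasDerivAt
    (f := fun s ↦ (X s, s)) t (hX.prodMk (hasDerivAt_id t))).congr_deriv ?_
  simp

lemma hasDerivAt_integral_of_continuous_deriv {g g' : ℝ → ℝ → E} (hg : ∀ x, Continuous (g x))
    (hg' : Continuous (uncurry g')) (hd : ∀ x y, HasDerivAt (g · y) (g' x y) x) (a b x : ℝ) :
    HasDerivAt (fun x ↦ ∫ y in a..b, g x y) (∫ y in a..b, g' x y) x := by
  obtain ⟨C, hC⟩ := ((isCompact_Icc (a := x - 1) (b := x + 1)).prod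
    (isCompact_uIcc (a := a) (b := b))).exists_bound_of_continuousOn hg'.continuousOn
  refine (hasDerivAt_integral_of_dominated_loc_of_deriv_le
    (s := Icc (x - 1) (x + 1)) (bound := fun _ ↦ C) (Icc_mem_nhds (by linarith) (by linarith))
    (.of_forall fun y ↦ (hg y).aestronglyMeasurable) ((hg x).intervalIntegrable _ _)
    (show Continuous (g' x) by fun_prop).aestronglyMeasurable
    (.of_forall fun y hy z hz ↦ hC (z, y) ⟨hz, uIoc_subset_uIcc hy⟩) (by simp)
    (.of_forall fun y _ z _ ↦ hd z y)).2

/-- Integrating in time first requires no mixed second derivatives of `A`. -/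
lemma hasDerivAt_of_hasDerivAt_left [CompleteSpace E] {A g g' : ℝ → ℝ → E} {A₀' : E} {T t z : ℝ}
    (hA : ∀ z, Continuous (A · z)) (hA₀ : HasDerivAt (A 0) A₀' z)
    (hAg : ∀ s ∈ Ioo 0 T, ∀ z, HasDerivAt (A · z) (g s z) s) (hg : ∀ z, Continuous (g · z))
    (hg' : Continuous (uncurry g')) (hd : ∀ s z, HasDerivAt (g s) (g' s z) z)
    (ht : t ∈ Icc 0 T) :
    HasDerivAt (A t) (A₀' + ∫ s in 0..t, g' s z) z := by
  have hint : A t = fun z ↦ A 0 z + ∫ s in 0..t, g s z := by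
    funext z
    rw [integral_eq_sub_of_hasDerivAt_of_le ht.1 (hA z).continuousOn
      (fun s hs ↦ hAg s (Ioo_subset_Ioo_right ht.2 hs) z) ((hg z).intervalIntegrable _ _)]
    abel
  rw [hint]
  exact hA₀.add (hasDerivAt_integral_of_continuous_deriv (g := fun z s ↦ g s z)
    (g' := fun z s ↦ g' s z) hg (by fun_prop) (fun z s ↦ hd s z) 0 t z)

lemma periodic_deriv {f : ℝ → E} {c : ℝ} (hf : Periodic f c) : Periodic (deriv f) c := fun x ↦ by
  rw [← deriv_comp_add_const, funext hf]

end Calculus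

lemma le_mul_exp_of_le_add_mul_integral {N : ℝ → ℝ} {C K T t : ℝ} (hN : Continuous N) (hK : 0 ≤ K)
    (h : ∀ t ∈ Icc 0 T, N t ≤ C + K * ∫ s in 0..t, N s) (ht : t ∈ Icc 0 T) :
    N t ≤ C * Real.exp (K * t) := by
  have hderiv (s : ℝ) : HasDerivAt (fun t ↦ C + K * ∫ s in 0..t, N s) (K * N s) s :=
    ((hN.integral_hasStrictDerivAt 0 s).hasDerivAt.const_mul K).const_add C
  have hgronwall := le_gronwallBound_of_liminf_deriv_right_le (δ := C) (K := K) (ε := 0)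
    (fun s _ ↦ (hderiv s).continuousAt.continuousWithinAt)
    (fun s _ _ hr ↦ (hderiv s).hasDerivWithinAt.liminf_right_slope_le hr) (by simp)
    (fun s hs ↦ by simpa using mul_le_mul_of_nonneg_left (h s (Ico_subset_Icc_self hs)) hK) t ht
  rw [gronwallBound_ε0, sub_zero] at hgronwall
  exact (h t ht).trans hgronwall

lemma forall_lt_of_forall_Ico_lt {φ : ℝ → ℝ} {a b r : ℝ} (hφ : ContinuousOn φ (Icc a b))
    (h : ∀ t ∈ Icc a b, (∀ s ∈ Ico a t, φ s < r) → φ t < r) : ∀ t ∈ Icc a b, φ t < r := by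
  by_contra! hne
  obtain ⟨t, ⟨ht, hrt⟩, hmin⟩ :=
    (isCompact_Icc.of_isClosed_subset (hφ.preimage_isClosed_of_isClosed isClosed_Icc isClosed_Ici)
      inter_subset_left).exists_isLeast hne
  refine (h t ht fun s hs ↦ ?_).not_ge hrt
  by_contra! hrs
  exact hs.2.not_ge (hmin ⟨⟨hs.1, hs.2.le.trans ht.2⟩, hrs⟩)

/-- The `L¹` norm of a `1`-periodic function over one period. -/
noncomputable def periodL1Norm (u : ℝ → ℝ) : ℝ := ∫ x in (0 : ℝ)..1, |u x|

lemma periodL1Norm_nonneg (u : ℝ → ℝ) : 0 ≤ periodL1Norm u :=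
  integral_nonneg zero_le_one fun _ _ ↦ abs_nonneg _

lemma periodL1Norm_const_mul (c : ℝ) (u : ℝ → ℝ) :
    periodL1Norm (fun x ↦ c * u x) = |c| * periodL1Norm u := by
  simp only [periodL1Norm, abs_mul, intervalIntegral.integral_const_mul]

lemma continuous_periodL1Norm {u : ℝ → ℝ → ℝ} (hu : Continuous (uncurry u)) :
    Continuous fun t ↦ periodL1Norm (u · t) :=
  continuous_parametric_intervalIntegral_of_continuous' (f := fun t x ↦ |u x t|) (by fun_prop) 0 1

lemma integral_deriv_eq_zero_of_periodic {g : ℝ → ℝ} (hg : ContDiff ℝ 1 g) (hper : Periodic g 1) :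
    ∫ x in (0 : ℝ)..1, deriv g x = 0 := by
  rw [integral_deriv_eq_sub (fun x _ ↦ hg.differentiable one_ne_zero x)
    ((hg.continuous_deriv le_rfl).intervalIntegrable _ _), sub_eq_zero]
  simpa using hper 0

lemma tendsto_periodL1Norm_slope {u : ℝ → ℝ} (hu : ContDiff ℝ 1 u) :
    Tendsto (fun h ↦ |h|⁻¹ * periodL1Norm (fun x ↦ u (x + h) - u x)) (𝓝[≠] 0)
      (𝓝 (periodL1Norm (deriv u))) := by
  have : Continuous (deriv u) := hu.continuous_deriv le_rfl
  have hmean (x h : ℝ) : h * ∫ θ in (0 : ℝ)..1, deriv u (x + θ * h) = u (x + h) - u x :=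
    integral_unitInterval_deriv_eq_sub (by fun_prop)
      fun θ _ ↦ (hu.differentiable one_ne_zero _).hasDerivAt
  have hcont : Continuous fun h ↦ periodL1Norm fun x ↦ ∫ θ in (0 : ℝ)..1, deriv u (x + θ * h) :=
    continuous_periodL1Norm (u := fun x h ↦ ∫ θ in (0 : ℝ)..1, deriv u (x + θ * h))
      (continuous_parametric_intervalIntegral_of_continuous' (by fun_prop) 0 1)
  have hlim := hcont.continuousWithinAt (s := {0}ᶜ) (x := 0) |>.tendsto
  simp only [mul_zero, add_zero, intervalIntegral.integral_const, sub_zero, one_smul] at hlim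
  refine hlim.congr' (eventually_nhdsWithin_of_forall fun h hh ↦ ?_)
  simp only [← hmean, periodL1Norm_const_mul]
  rw [inv_mul_cancel_left₀ (abs_ne_zero.2 hh)]

/-- The smooth approximation of `|u|` by `√(u² + ε²)`, which makes the `L¹` norm differentiable in
time. -/
noncomputable def smoothAbs (ε u : ℝ) : ℝ := √(u ^ 2 + ε ^ 2)

section SmoothAbs

variable {ε : ℝ}

lemma sq_smoothAbs (ε u : ℝ) : smoothAbs ε u ^ 2 = u ^ 2 + ε ^ 2 := Real.sq_sqrt (by positivity)

lemma abs_le_smoothAbs (ε u : ℝ) : |u| ≤ smoothAbs ε u :=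
  Real.abs_le_sqrt (le_add_of_nonneg_right (sq_nonneg ε))

lemma le_smoothAbs (ε u : ℝ) : ε ≤ smoothAbs ε u :=
  Real.le_sqrt_of_sq_le (le_add_of_nonneg_left (sq_nonneg u))

lemma smoothAbs_pos (hε : 0 < ε) (u : ℝ) : 0 < smoothAbs ε u := hε.trans_le (le_smoothAbs ε u)

lemma smoothAbs_le_abs_add (hε : 0 ≤ ε) (u : ℝ) : smoothAbs ε u ≤ |u| + ε :=
  Real.sqrt_le_iff.2 ⟨by positivity, by nlinarith [sq_abs u, abs_nonneg u]⟩

lemma abs_div_smoothAbs_le_one (ε u : ℝ) : |u / smoothAbs ε u| ≤ 1 := by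
  rw [abs_div]
  exact div_le_one_of_le₀ ((abs_le_smoothAbs ε u).trans (le_abs_self _)) (abs_nonneg _)

lemma continuous_smoothAbs (ε : ℝ) : Continuous (smoothAbs ε) := by
  unfold smoothAbs; fun_prop

lemma hasDerivAt_smoothAbs (hε : 0 < ε) (u : ℝ) :
    HasDerivAt (smoothAbs ε) (u / smoothAbs ε u) u := by
  refine (((hasDerivAt_id u).pow 2).add_const (ε ^ 2)).sqrt
    (show u ^ 2 + ε ^ 2 ≠ 0 by positivity) |>.congr_deriv ?_
  simp [smoothAbs, mul_div_mul_left]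

lemma continuous_div_smoothAbs (hε : 0 < ε) : Continuous fun u ↦ u / smoothAbs ε u :=
  continuous_id.div (continuous_smoothAbs ε) fun u ↦ (smoothAbs_pos hε u).ne'

lemma contDiff_smoothAbs (hε : 0 < ε) : ContDiff ℝ 1 (smoothAbs ε) :=
  ContDiff.sqrt (by fun_prop) fun u ↦ (show 0 < u ^ 2 + ε ^ 2 by positivity).ne'

end SmoothAbs

section ContinuityEquation

lemma div_smoothAbs_mul_deriv_flux {u c : ℝ → ℝ} {ε : ℝ} (hu : Differentiable ℝ u)
    (hc : Differentiable ℝ c) (hε : 0 < ε) (x : ℝ) :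
    u x / smoothAbs ε (u x) * deriv (fun y ↦ c y * u y) x
      = deriv (fun y ↦ c y * smoothAbs ε (u y)) x - ε ^ 2 / smoothAbs ε (u x) * deriv c x := by
  have hdc := (hc x).hasDerivAt
  have hdu := (hu x).hasDerivAt
  have hdη : HasDerivAt (fun y ↦ smoothAbs ε (u y)) (u x / smoothAbs ε (u x) * deriv u x) x :=
    (hasDerivAt_smoothAbs hε (u x)).comp x hdu
  rw [(hdc.fun_mul hdu).deriv, (hdc.fun_mul hdη).deriv]
  have := (smoothAbs_pos hε (u x)).ne'
  field_simp
  rw [sq_smoothAbs]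
  ring

lemma neg_integral_mul_deriv_flux_le {u c : ℝ → ℝ} {ε : ℝ} (hu : ContDiff ℝ 1 u)
    (hc : ContDiff ℝ 1 c) (huper : Periodic u 1) (hcper : Periodic c 1) (hε : 0 < ε) :
    -∫ x in (0 : ℝ)..1, u x / smoothAbs ε (u x) * deriv (fun y ↦ c y * u y) x
      ≤ ε * periodL1Norm (deriv c) := by
  have hflux : ContDiff ℝ 1 fun x ↦ c x * smoothAbs ε (u x) :=
    hc.mul ((contDiff_smoothAbs hε).comp hu)
  have hflux' : Continuous (deriv fun x ↦ c x * smoothAbs ε (u x)) := hflux.continuous_deriv le_rfl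
  have hc' : Continuous (deriv c) := hc.continuous_deriv le_rfl
  have hη : Continuous fun x ↦ smoothAbs ε (u x) := (continuous_smoothAbs ε).comp hu.continuous
  have herr : Continuous fun x ↦ ε ^ 2 / smoothAbs ε (u x) * deriv c x :=
    (continuous_const.div hη fun x ↦ (smoothAbs_pos hε _).ne').mul hc'
  calc -∫ x in (0 : ℝ)..1, u x / smoothAbs ε (u x) * deriv (fun y ↦ c y * u y) x
      = ∫ x in (0 : ℝ)..1, ε ^ 2 / smoothAbs ε (u x) * deriv c x := by
        simp only [div_smoothAbs_mul_deriv_flux (hu.differentiable one_ne_zero)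
          (hc.differentiable one_ne_zero) hε]
        rw [intervalIntegral.integral_sub (hflux'.intervalIntegrable _ _)
          (herr.intervalIntegrable _ _), integral_deriv_eq_zero_of_periodic hflux
          (fun x ↦ by simp only [huper x, hcper x]), zero_sub, neg_neg]
    _ ≤ ∫ x in (0 : ℝ)..1, ε * |deriv c x| := by
        refine integral_mono_on zero_le_one (herr.intervalIntegrable _ _)
          ((by fun_prop : Continuous _).intervalIntegrable _ _) fun x _ ↦ ?_
        have hη_pos := smoothAbs_pos hε (u x)
        have hle : ε ^ 2 / smoothAbs ε (u x) ≤ ε := by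
          rw [div_le_iff₀ hη_pos, sq]
          exact mul_le_mul_of_nonneg_left (le_smoothAbs ε _) hε.le
        exact (mul_le_mul_of_nonneg_left (le_abs_self _) (by positivity)).trans
          (mul_le_mul_of_nonneg_right hle (abs_nonneg _))
    _ = ε * periodL1Norm (deriv c) := intervalIntegral.integral_const_mul _ _

lemma hasDerivAt_integral_smoothAbs {u : ℝ → ℝ → ℝ} {ε : ℝ} (hu : ContDiff ℝ 1 (uncurry u))
    (hε : 0 < ε) (t : ℝ) :
    HasDerivAt (fun t ↦ ∫ x in (0 : ℝ)..1, smoothAbs ε (u x t))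
      (∫ x in (0 : ℝ)..1, u x t / smoothAbs ε (u x t) * deriv (u x) t) t := by
  have hη := continuous_smoothAbs ε
  have hut : Continuous fun p : ℝ × ℝ ↦ deriv (u p.2) p.1 :=
    (continuous_deriv_right_of_contDiff hu).comp continuous_swap
  have hsign : Continuous fun p : ℝ × ℝ ↦ u p.2 p.1 / smoothAbs ε (u p.2 p.1) :=
    (continuous_div_smoothAbs hε).comp (by fun_prop)
  exact hasDerivAt_integral_of_continuous_deriv (g := fun t x ↦ smoothAbs ε (u x t))
    (g' := fun t x ↦ u x t / smoothAbs ε (u x t) * deriv (u x) t)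
    (fun t ↦ by fun_prop) (hsign.mul hut)
    (fun t x ↦ (hasDerivAt_smoothAbs hε _).comp t (hasDerivAt_right_of_contDiff hu x t)) 0 1 t

lemma integral_div_smoothAbs_mul_le {u f c w : ℝ → ℝ} {ε : ℝ} (hu : ContDiff ℝ 1 u)
    (hc : ContDiff ℝ 1 c) (hf : Continuous f) (huper : Periodic u 1) (hcper : Periodic c 1)
    (hε : 0 < ε) (heq : ∀ x, w x + deriv (fun y ↦ c y * u y) x = f x) :
    ∫ x in (0 : ℝ)..1, u x / smoothAbs ε (u x) * w x
      ≤ periodL1Norm f + ε * periodL1Norm (deriv c) := by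
  have hsign : Continuous fun x ↦ u x / smoothAbs ε (u x) :=
    (continuous_div_smoothAbs hε).comp hu.continuous
  have hflux : Continuous (deriv fun y ↦ c y * u y) := (hc.mul hu).continuous_deriv le_rfl
  have hsource : ∫ x in (0 : ℝ)..1, u x / smoothAbs ε (u x) * f x ≤ periodL1Norm f := by
    refine integral_mono_on zero_le_one ((hsign.mul hf).intervalIntegrable _ _)
      (hf.abs.intervalIntegrable _ _) fun x _ ↦ (le_abs_self _).trans ?_
    rw [abs_mul]
    exact mul_le_of_le_one_left (abs_nonneg _) (abs_div_smoothAbs_le_one ε _)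
  have hsplit (x : ℝ) : u x / smoothAbs ε (u x) * w x = u x / smoothAbs ε (u x) * f x
      - u x / smoothAbs ε (u x) * deriv (fun y ↦ c y * u y) x := by
    rw [← heq]; ring
  simp only [hsplit]
  rw [intervalIntegral.integral_sub ((hsign.fun_mul hf).intervalIntegrable _ _)
    ((hsign.fun_mul hflux).intervalIntegrable _ _)]
  linarith [neg_integral_mul_deriv_flux_le hu hc huper hcper hε]

variable {u c f : ℝ → ℝ → ℝ} {T t : ℝ}

lemma integral_smoothAbs_le {ε : ℝ} (hu : ContDiff ℝ 1 (uncurry u))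
    (hc : ContDiff ℝ 1 (uncurry c)) (hf : Continuous (uncurry f))
    (huper : ∀ t, Periodic (u · t) 1) (hcper : ∀ t, Periodic (c · t) 1)
    (heq : ∀ t ∈ Ioo 0 T, ∀ x, deriv (u x) t + deriv (fun y ↦ c y t * u y t) x = f x t)
    (hε : 0 < ε) (ht : t ∈ Icc 0 T) :
    ∫ x in (0 : ℝ)..1, smoothAbs ε (u x t) ≤ (∫ x in (0 : ℝ)..1, smoothAbs ε (u x 0))
      + ∫ s in 0..t, (periodL1Norm (f · s) + ε * periodL1Norm (deriv (c · s))) := by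
  have hf_norm := continuous_periodL1Norm hf
  have hc_norm := continuous_periodL1Norm (continuous_deriv_left_of_contDiff hc)
  have hut : Continuous fun p : ℝ × ℝ ↦ deriv (u p.2) p.1 :=
    (continuous_deriv_right_of_contDiff hu).comp continuous_swap
  have hsign : Continuous fun p : ℝ × ℝ ↦ u p.2 p.1 / smoothAbs ε (u p.2 p.1) :=
    (continuous_div_smoothAbs hε).comp (by fun_prop)
  have hrate : Continuous fun s ↦
      ∫ x in (0 : ℝ)..1, u x s / smoothAbs ε (u x s) * deriv (u x) s :=
    continuous_parametric_intervalIntegral_of_continuous'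
      (f := fun s x ↦ u x s / smoothAbs ε (u x s) * deriv (u x) s) (hsign.mul hut) 0 1
  rw [← sub_le_iff_le_add', ← integral_eq_sub_of_hasDerivAt
    (fun s _ ↦ hasDerivAt_integral_smoothAbs hu hε s) (hrate.intervalIntegrable 0 t)]
  exact integral_mono_on_of_le_Ioo ht.1 (hrate.intervalIntegrable _ _)
    ((hf_norm.add (hc_norm.const_mul ε)).intervalIntegrable _ _) fun s hs ↦
      integral_div_smoothAbs_mul_le (by fun_prop) (by fun_prop) (by fun_prop) (huper s) (hcper s)
        hε (heq s (Ioo_subset_Ioo_right ht.2 hs))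

theorem periodL1Norm_le_of_continuityEquation (hu : ContDiff ℝ 1 (uncurry u))
    (hc : ContDiff ℝ 1 (uncurry c)) (hf : Continuous (uncurry f))
    (huper : ∀ t, Periodic (u · t) 1) (hcper : ∀ t, Periodic (c · t) 1)
    (heq : ∀ t ∈ Ioo 0 T, ∀ x, deriv (u x) t + deriv (fun y ↦ c y t * u y t) x = f x t)
    (ht : t ∈ Icc 0 T) :
    periodL1Norm (u · t) ≤ periodL1Norm (u · 0) + ∫ s in 0..t, periodL1Norm (f · s) := by
  have hf_norm := continuous_periodL1Norm hf
  have hc_norm := continuous_periodL1Norm (continuous_deriv_left_of_contDiff hc)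
  have hη (ε t : ℝ) : Continuous fun x ↦ smoothAbs ε (u x t) :=
    (continuous_smoothAbs ε).comp (by fun_prop)
  set C := 1 + ∫ s in 0..t, periodL1Norm (deriv (c · s))
  have hC : 0 < C := add_pos_of_pos_of_nonneg one_pos
    (integral_nonneg ht.1 fun _ _ ↦ periodL1Norm_nonneg _)
  refine le_of_forall_pos_le_add fun δ hδ ↦ ?_
  obtain ⟨ε, hε, hεC⟩ : ∃ ε > 0, ε * C = δ := ⟨δ / C, by positivity, by field_simp⟩
  have hlower : periodL1Norm (u · t) ≤ ∫ x in (0 : ℝ)..1, smoothAbs ε (u x t) :=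
    integral_mono_on zero_le_one ((by fun_prop : Continuous _).intervalIntegrable _ _)
      ((hη ε t).intervalIntegrable _ _) fun x _ ↦ abs_le_smoothAbs ε _
  have hupper : ∫ x in (0 : ℝ)..1, smoothAbs ε (u x 0) ≤ periodL1Norm (u · 0) + ε := by
    have hmono := integral_mono_on (μ := volume) zero_le_one
      ((hη ε 0).intervalIntegrable 0 1)
      ((show Continuous fun x ↦ |u x 0| + ε by fun_prop).intervalIntegrable _ _)
      fun x _ ↦ smoothAbs_le_abs_add hε.le _
    rwa [intervalIntegral.integral_add ((by fun_prop : Continuous _).intervalIntegrable _ _)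
      (by simp), intervalIntegral.integral_const, sub_zero, one_smul] at hmono
  have hmain := integral_smoothAbs_le hu hc hf huper hcper heq hε ht
  rw [intervalIntegral.integral_add (hf_norm.intervalIntegrable _ _)
    ((hc_norm.const_mul ε).intervalIntegrable _ _), intervalIntegral.integral_const_mul] at hmain
  linarith

/-- The difference of two solutions satisfies the continuity equation with the mean velocity
`a (u + v)`. -/
theorem periodL1Norm_sub_le_of_burgers {u v f g : ℝ → ℝ → ℝ} {a : ℝ}
    (hu : ContDiff ℝ 1 (uncurry u)) (hv : ContDiff ℝ 1 (uncurry v))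
    (hf : Continuous (uncurry f)) (hg : Continuous (uncurry g))
    (huper : ∀ t, Periodic (u · t) 1) (hvper : ∀ t, Periodic (v · t) 1)
    (hueq : ∀ t ∈ Ioo 0 T, ∀ x, deriv (u x) t + a * deriv (fun y ↦ u y t ^ 2) x = f x t)
    (hveq : ∀ t ∈ Ioo 0 T, ∀ x, deriv (v x) t + a * deriv (fun y ↦ v y t ^ 2) x = g x t)
    (ht : t ∈ Icc 0 T) :
    periodL1Norm (fun x ↦ u x t - v x t) ≤ periodL1Norm (fun x ↦ u x 0 - v x 0)
      + ∫ s in 0..t, periodL1Norm (fun x ↦ f x s - g x s) := by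
  refine periodL1Norm_le_of_continuityEquation (u := fun x t ↦ u x t - v x t)
    (c := fun x t ↦ a * (u x t + v x t)) (f := fun x t ↦ f x t - g x t)
    (by fun_prop) (by fun_prop) (by fun_prop) (fun t x ↦ by simp only [huper t x, hvper t x])
    (fun t x ↦ by simp only [huper t x, hvper t x]) (fun t ht x ↦ ?_) ht
  have hflux : (fun y ↦ a * (u y t + v y t) * (u y t - v y t))
      = fun y ↦ a * (u y t ^ 2 - v y t ^ 2) := by funext y; ring
  have hdu := hasDerivAt_left_of_contDiff (f := fun x t ↦ u x t ^ 2) (by fun_prop) x t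
  have hdv := hasDerivAt_left_of_contDiff (f := fun x t ↦ v x t ^ 2) (by fun_prop) x t
  rw [hflux, ((hdu.fun_sub hdv).const_mul a).deriv,
    ((hasDerivAt_right_of_contDiff hu x t).fun_sub (hasDerivAt_right_of_contDiff hv x t)).deriv,
    ← hueq t ht x, ← hveq t ht x]
  ring

end ContinuityEquation

section NonlocalTerm

/-- The nonlocal coupling `u ↦ ∫_{-1}^{1} ½ k((x + y) / 2) u(y) dy` of weakly nonlinear gas
dynamics, with kernel `k = σ₂'`. -/
noncomputable def nonlocalTerm (k u : ℝ → ℝ) (x : ℝ) : ℝ :=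
  ∫ y in (-1 : ℝ)..1, (1 / 2) * k ((x + y) / 2) * u y

variable {k u v : ℝ → ℝ} {M : ℝ}

lemma nonlocalTerm_eq_integral_comp_sub (hk : Periodic k (1 / 2)) (hu : Periodic u 1) (x : ℝ) :
    nonlocalTerm k u x = ∫ y in (-1 : ℝ)..1, (1 / 2) * k (y / 2) * u (y - x) := by
  have hper : Periodic (fun y ↦ (1 / 2) * k (y / 2) * u (y - x)) 1 := fun y ↦ by
    simp only [add_div, hk (y / 2), add_sub_right_comm, hu (y - x)]
  have hshift := integral_comp_add_right (a := -1) (b := 1)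
    (fun y ↦ (1 / 2) * k (y / 2) * u (y - x)) x
  have htwo := (hper.nat_mul 2).intervalIntegral_add_eq (-1 + x) (-1)
  simp only [add_sub_cancel_right] at hshift
  simp only [nonlocalTerm, add_comm x, hshift]
  convert htwo using 2 <;> push_cast <;> ring

lemma nonlocalTerm_comp_sub (hk : Periodic k (1 / 2)) (hu : Periodic u 1) (δ x : ℝ) :
    nonlocalTerm k (fun y ↦ u (y - δ)) x = nonlocalTerm k u (x + δ) := by
  rw [nonlocalTerm_eq_integral_comp_sub hk hu, nonlocalTerm_eq_integral_comp_sub hk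
    (hu.sub_const δ)]
  simp only [sub_sub]

lemma nonlocalTerm_sub (hk : Continuous k) (hu : Continuous u) (hv : Continuous v) (x : ℝ) :
    nonlocalTerm k (fun y ↦ u y - v y) x = nonlocalTerm k u x - nonlocalTerm k v x := by
  simp only [nonlocalTerm, mul_sub]
  exact intervalIntegral.integral_sub ((by fun_prop : Continuous _).intervalIntegrable _ _)
    ((by fun_prop : Continuous _).intervalIntegrable _ _)

lemma abs_nonlocalTerm_le (hk : ∀ x, |k x| ≤ M) (hu : Continuous u) (huper : Periodic u 1)
    (x : ℝ) : |nonlocalTerm k u x| ≤ M * periodL1Norm u := by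
  have htwo : ∫ y in (-1 : ℝ)..1, |u y| = 2 * periodL1Norm u :=
    calc ∫ y in (-1 : ℝ)..1, |u y| = ∫ y in (-1 : ℝ)..-1 + (2 : ℤ) • 1, |u y| := by norm_num
      _ = (2 : ℤ) • ∫ y in (-1 : ℝ)..-1 + 1, |u y| :=
        (huper.comp abs).intervalIntegral_add_zsmul_eq 2 (-1) hu.abs.intervalIntegrable
      _ = (2 : ℤ) • ∫ y in (0 : ℝ)..0 + 1, |u y| :=
        congrArg _ ((huper.comp abs).intervalIntegral_add_eq (-1) 0)
      _ = 2 * periodL1Norm u := by simp [periodL1Norm]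
  calc |nonlocalTerm k u x| ≤ ∫ y in (-1 : ℝ)..1, M / 2 * |u y| := by
        rw [nonlocalTerm, ← Real.norm_eq_abs]
        refine norm_integral_le_of_norm_le (show (-1 : ℝ) ≤ 1 by norm_num)
          (.of_forall fun y _ ↦ ?_) ((hu.abs.const_mul (M / 2)).intervalIntegrable _ _)
        rw [Real.norm_eq_abs, abs_mul, abs_mul, abs_of_pos one_half_pos]
        have := mul_le_mul_of_nonneg_right (hk ((x + y) / 2)) (abs_nonneg (u y))
        linarith
    _ = M * periodL1Norm u := by
        rw [intervalIntegral.integral_const_mul, htwo]; ring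

lemma periodL1Norm_nonlocalTerm_le (hkc : Continuous k) (hk : ∀ x, |k x| ≤ M) (hu : Continuous u)
    (huper : Periodic u 1) : periodL1Norm (nonlocalTerm k u) ≤ M * periodL1Norm u := by
  have hcont : Continuous (nonlocalTerm k u) :=
    continuous_parametric_intervalIntegral_of_continuous' (by fun_prop) _ _
  calc periodL1Norm (nonlocalTerm k u) ≤ ∫ _ in (0 : ℝ)..1, M * periodL1Norm u :=
        integral_mono_on zero_le_one (hcont.abs.intervalIntegrable _ _)
          (continuous_const.intervalIntegrable _ _) fun x _ ↦ abs_nonlocalTerm_le hk hu huper x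
    _ = M * periodL1Norm u := by simp

lemma continuous_nonlocalTerm {u : ℝ → ℝ → ℝ} (hk : Continuous k) (hu : Continuous (uncurry u)) :
    Continuous (uncurry fun x t ↦ nonlocalTerm k (u · t) x) :=
  continuous_parametric_intervalIntegral_of_continuous'
    (f := fun (p : ℝ × ℝ) y ↦ (1 / 2) * k ((p.1 + y) / 2) * u y p.2) (by fun_prop) _ _

/-- Moving the translation onto `u` makes the merely continuous kernel harmless. -/
lemma hasDerivAt_nonlocalTerm (hkc : Continuous k) (hk : Periodic k (1 / 2))
    (hu : ContDiff ℝ 1 u) (huper : Periodic u 1) (x : ℝ) :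
    HasDerivAt (nonlocalTerm k u) (-nonlocalTerm k (deriv u) x) x := by
  have : Continuous (deriv u) := hu.continuous_deriv le_rfl
  have hd (x y : ℝ) : HasDerivAt (fun x ↦ (1 / 2) * k (y / 2) * u (y - x))
      (-((1 / 2) * k (y / 2) * deriv u (y - x))) x :=
    ((hu.differentiable one_ne_zero (y - x)).hasDerivAt.comp_const_sub y x).const_mul _
      |>.congr_deriv (by ring)
  have hint := hasDerivAt_integral_of_continuous_deriv
    (g := fun x y ↦ (1 / 2) * k (y / 2) * u (y - x))
    (g' := fun x y ↦ -((1 / 2) * k (y / 2) * deriv u (y - x)))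
    (fun x ↦ by fun_prop) (by fun_prop) hd (-1) 1 x
  rw [intervalIntegral.integral_neg] at hint
  rwa [funext (nonlocalTerm_eq_integral_comp_sub hk huper),
    nonlocalTerm_eq_integral_comp_sub hk (periodic_deriv huper)]

end NonlocalTerm

namespace IsClassicalSolution

variable {α β : ℝ} {σ₂ : ℝ → ℝ} {T t M : ℝ} {σ₁ σ₃ τ₁ τ₃ : ℝ → ℝ → ℝ}

lemma swap (h : IsClassicalSolution α β σ₂ T σ₁ σ₃) :
    IsClassicalSolution (-α) (-β) σ₂ T σ₃ σ₁ :=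
  ⟨h.2.1, h.1, fun x t ht ↦ ⟨by linear_combination (h.2.2 x t ht).2,
    by linear_combination (h.2.2 x t ht).1⟩⟩

lemma periodic_fst (h : IsClassicalSolution α β σ₂ T σ₁ σ₃) (t : ℝ) : Periodic (σ₁ · t) 1 :=
  fun x ↦ h.1 x t

lemma deriv_add_deriv_sq (h : IsClassicalSolution α β σ₂ T σ₁ σ₃) (ht : t ∈ Ioo 0 T) (x : ℝ) :
    deriv (σ₁ x) t + α / 2 * deriv (fun y ↦ σ₁ y t ^ 2) x
      = -(β / 2) * nonlocalTerm (deriv σ₂) (σ₃ · t) x := by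
  have heq := (h.2.2 x t (Ioo_subset_Icc_self ht)).1
  rw [derivWithin_of_mem_nhds (Icc_mem_nhds ht.1 ht.2)] at heq
  rw [nonlocalTerm]
  linear_combination heq

lemma translate (h : IsClassicalSolution α β σ₂ T σ₁ σ₃) (hσ₂ : Periodic σ₂ (1 / 2)) (δ : ℝ) :
    IsClassicalSolution α β σ₂ T (fun x t ↦ σ₁ (x + δ) t) (fun x t ↦ σ₃ (x - δ) t) := by
  have hN₃ (t x : ℝ) := nonlocalTerm_comp_sub (periodic_deriv hσ₂) (h.swap.periodic_fst t) δ x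
  have hN₁ (t x : ℝ) := nonlocalTerm_comp_sub (periodic_deriv hσ₂) (h.periodic_fst t) (-δ) x
  simp only [nonlocalTerm, sub_neg_eq_add, ← sub_eq_add_neg] at hN₁ hN₃
  refine ⟨fun x t ↦ by simp only [add_right_comm x 1, h.1],
    fun x t ↦ by simp only [add_sub_right_comm x 1, h.2.1], fun x t ht ↦ ⟨?_, ?_⟩⟩
  · simpa only [hN₃, deriv_comp_add_const (fun y ↦ σ₁ y t ^ 2)] using (h.2.2 (x + δ) t ht).1
  · simpa only [hN₁, deriv_comp_sub_const (fun y ↦ σ₃ y t ^ 2)] using (h.2.2 (x - δ) t ht).2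

lemma periodL1Norm_sub_le_add_integral (h : IsClassicalSolution α β σ₂ T σ₁ σ₃)
    (h' : IsClassicalSolution α β σ₂ T τ₁ τ₃) (hσ₂ : ContDiff ℝ 1 σ₂)
    (hM : ∀ x, |deriv σ₂ x| ≤ M) (hσ₁ : ContDiff ℝ 1 (uncurry σ₁)) (hσ₃ : Continuous (uncurry σ₃))
    (hτ₁ : ContDiff ℝ 1 (uncurry τ₁)) (hτ₃ : Continuous (uncurry τ₃)) (ht : t ∈ Icc 0 T) :
    periodL1Norm (fun x ↦ σ₁ x t - τ₁ x t) ≤ periodL1Norm (fun x ↦ σ₁ x 0 - τ₁ x 0)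
      + |β| / 2 * M * ∫ s in 0..t, periodL1Norm (fun x ↦ σ₃ x s - τ₃ x s) := by
  have hk : Continuous (deriv σ₂) := hσ₂.continuous_deriv le_rfl
  have hf : Continuous (uncurry fun x s ↦ -(β / 2) * nonlocalTerm (deriv σ₂) (σ₃ · s) x) :=
    (continuous_nonlocalTerm hk hσ₃).const_mul _
  have hg : Continuous (uncurry fun x s ↦ -(β / 2) * nonlocalTerm (deriv σ₂) (τ₃ · s) x) :=
    (continuous_nonlocalTerm hk hτ₃).const_mul _
  have hfg : Continuous fun s ↦ periodL1Norm (fun x ↦ -(β / 2) * nonlocalTerm (deriv σ₂) (σ₃ · s) x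
      - -(β / 2) * nonlocalTerm (deriv σ₂) (τ₃ · s) x) :=
    continuous_periodL1Norm (by fun_prop)
  have hστ : Continuous fun s ↦ periodL1Norm (fun x ↦ σ₃ x s - τ₃ x s) :=
    continuous_periodL1Norm (by fun_prop)
  have hsource (s : ℝ) : periodL1Norm (fun x ↦ -(β / 2) * nonlocalTerm (deriv σ₂) (σ₃ · s) x
      - -(β / 2) * nonlocalTerm (deriv σ₂) (τ₃ · s) x)
      ≤ |β| / 2 * M * periodL1Norm (fun x ↦ σ₃ x s - τ₃ x s) := by
    simp only [← mul_sub, ← nonlocalTerm_sub hk (show Continuous (σ₃ · s) by fun_prop)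
      (show Continuous (τ₃ · s) by fun_prop), periodL1Norm_const_mul, abs_neg, abs_div, abs_two,
      mul_assoc]
    gcongr
    exact periodL1Norm_nonlocalTerm_le hk hM (by fun_prop)
      ((h.swap.periodic_fst s).sub (h'.swap.periodic_fst s))
  refine (periodL1Norm_sub_le_of_burgers hσ₁ hτ₁ hf hg h.periodic_fst h'.periodic_fst
    (fun _ ↦ h.deriv_add_deriv_sq) (fun _ ↦ h'.deriv_add_deriv_sq) ht).trans ?_
  rw [← intervalIntegral.integral_const_mul]
  gcongr
  exact integral_mono_on ht.1 (hfg.intervalIntegrable _ _)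
    ((hστ.const_mul _).intervalIntegrable _ _) fun s _ ↦ hsource s

theorem periodL1Norm_sub_add_le (h : IsClassicalSolution α β σ₂ T σ₁ σ₃)
    (h' : IsClassicalSolution α β σ₂ T τ₁ τ₃) (hσ₂ : ContDiff ℝ 1 σ₂)
    (hM : ∀ x, |deriv σ₂ x| ≤ M) (hσ₁ : ContDiff ℝ 1 (uncurry σ₁))
    (hσ₃ : ContDiff ℝ 1 (uncurry σ₃)) (hτ₁ : ContDiff ℝ 1 (uncurry τ₁))
    (hτ₃ : ContDiff ℝ 1 (uncurry τ₃)) (ht : t ∈ Icc 0 T) :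
    periodL1Norm (fun x ↦ σ₁ x t - τ₁ x t) + periodL1Norm (fun x ↦ σ₃ x t - τ₃ x t)
      ≤ (periodL1Norm (fun x ↦ σ₁ x 0 - τ₁ x 0) + periodL1Norm (fun x ↦ σ₃ x 0 - τ₃ x 0))
        * Real.exp (|β| / 2 * M * t) := by
  have hM₀ : 0 ≤ M := (abs_nonneg _).trans (hM 0)
  have hN₁ : Continuous fun s ↦ periodL1Norm (fun x ↦ σ₁ x s - τ₁ x s) :=
    continuous_periodL1Norm (by fun_prop)
  have hN₃ : Continuous fun s ↦ periodL1Norm (fun x ↦ σ₃ x s - τ₃ x s) :=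
    continuous_periodL1Norm (by fun_prop)
  refine le_mul_exp_of_le_add_mul_integral (N := fun t ↦ periodL1Norm (fun x ↦ σ₁ x t - τ₁ x t)
    + periodL1Norm (fun x ↦ σ₃ x t - τ₃ x t)) (hN₁.add hN₃) (by positivity) (fun s hs ↦ ?_) ht
  have h₁ := h.periodL1Norm_sub_le_add_integral h' hσ₂ hM hσ₁ hσ₃.continuous hτ₁ hτ₃.continuous hs
  have h₃ := h.swap.periodL1Norm_sub_le_add_integral h'.swap hσ₂ hM hσ₃ hσ₁.continuous hτ₃
    hτ₁.continuous hs
  rw [abs_neg] at h₃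
  rw [intervalIntegral.integral_add (hN₁.intervalIntegrable _ _) (hN₃.intervalIntegrable _ _)]
  linarith

/-- The total variations over a period are the limits of `L¹` distances between the solution and
its translates. -/
theorem periodL1Norm_deriv_add_le (h : IsClassicalSolution α β σ₂ T σ₁ σ₃)
    (hσ₂ : ContDiff ℝ 1 σ₂) (hσ₂per : Periodic σ₂ (1 / 2)) (hM : ∀ x, |deriv σ₂ x| ≤ M)
    (hσ₁ : ContDiff ℝ 1 (uncurry σ₁)) (hσ₃ : ContDiff ℝ 1 (uncurry σ₃)) (ht : t ∈ Icc 0 T) :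
    periodL1Norm (deriv (σ₁ · t)) + periodL1Norm (deriv (σ₃ · t))
      ≤ (periodL1Norm (deriv (σ₁ · 0)) + periodL1Norm (deriv (σ₃ · 0)))
        * Real.exp (|β| / 2 * M * t) := by
  have hneg : Tendsto (fun δ : ℝ ↦ -δ) (𝓝[≠] 0) (𝓝[≠] 0) := by
    simpa using (hasDerivAt_neg (0 : ℝ)).tendsto_nhdsNE (by norm_num)
  have hlim (s : ℝ) := (tendsto_periodL1Norm_slope (show ContDiff ℝ 1 (σ₁ · s) by fun_prop)).add
    ((tendsto_periodL1Norm_slope (show ContDiff ℝ 1 (σ₃ · s) by fun_prop)).comp hneg)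
  refine le_of_tendsto_of_tendsto' (hlim t) ((hlim 0).mul_const _) fun δ ↦ ?_
  have hstab := (h.translate hσ₂per δ).periodL1Norm_sub_add_le h hσ₂ hM (by fun_prop)
    (by fun_prop) hσ₁ hσ₃ ht
  simp only [Function.comp_apply, abs_neg, ← sub_eq_add_neg, ← mul_add]
  rw [mul_assoc]
  exact mul_le_mul_of_nonneg_left hstab (by positivity)

end IsClassicalSolution

lemma hasDerivAt_flow {b X : ℝ → ℝ → ℝ} {T t : ℝ} (hb : ContDiff ℝ 1 (uncurry b))
    (hX : ContDiff ℝ 1 (uncurry X))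
    (hode : ∀ s ∈ Ioo 0 T, ∀ z, HasDerivAt (X · z) (b (X s z) s) s) (hinit : ∀ z, X 0 z = z)
    (ht : t ∈ Icc 0 T) (z : ℝ) :
    HasDerivAt (X t) (1 + ∫ s in 0..t, deriv (fun z ↦ b (X s z) s) z) z := by
  have hbX : ContDiff ℝ 1 (uncurry fun z s ↦ b (X s z) s) := by fun_prop
  exact hasDerivAt_of_hasDerivAt_left (g := fun s z ↦ b (X s z) s)
    (g' := fun s z ↦ deriv (fun z ↦ b (X s z) s) z) (fun z ↦ by fun_prop)
    ((hasDerivAt_id z).congr_of_eventuallyEq (.of_forall hinit)) hode (fun z ↦ by fun_prop)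
    ((continuous_deriv_left_of_contDiff hbX).comp continuous_swap)
    (fun s z ↦ hasDerivAt_left_of_contDiff hbX z s) ht

namespace IsClassicalSolution

variable {α β : ℝ} {σ₂ : ℝ → ℝ} {T t M : ℝ} {σ₁ σ₃ X : ℝ → ℝ → ℝ}

lemma hasDerivAt_along_flow (h : IsClassicalSolution α β σ₂ T σ₁ σ₃)
    (hσ₁ : ContDiff ℝ 1 (uncurry σ₁)) {Y : ℝ → ℝ} (ht : t ∈ Ioo 0 T)
    (hY : HasDerivAt Y (α * σ₁ (Y t) t) t) :
    HasDerivAt (fun s ↦ σ₁ (Y s) s) (-(β / 2) * nonlocalTerm (deriv σ₂) (σ₃ · t) (Y t)) t := by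
  refine (hasDerivAt_along_curve hσ₁ hY).congr_deriv ?_
  rw [← h.deriv_add_deriv_sq ht, ((hasDerivAt_left_of_contDiff hσ₁ (Y t) t).fun_pow 2).deriv,
    smul_eq_mul]
  ring

lemma hasDerivAt_comp_flow (h : IsClassicalSolution α β σ₂ T σ₁ σ₃) (hσ₂ : ContDiff ℝ 1 σ₂)
    (hσ₂per : Periodic σ₂ (1 / 2)) (hσ₁ : ContDiff ℝ 1 (uncurry σ₁))
    (hσ₃ : ContDiff ℝ 1 (uncurry σ₃)) (hX : ContDiff ℝ 1 (uncurry X))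
    (hode : ∀ s ∈ Ioo 0 T, ∀ z, HasDerivAt (X · z) (α * σ₁ (X s z) s) s) (hinit : ∀ z, X 0 z = z)
    (ht : t ∈ Icc 0 T) (z : ℝ) :
    HasDerivAt (fun z ↦ σ₁ (X t z) t) (deriv (σ₁ · 0) z + ∫ s in 0..t,
      β / 2 * nonlocalTerm (deriv σ₂) (deriv (σ₃ · s)) (X s z) * deriv (X s) z) z := by
  have hk : Continuous (deriv σ₂) := hσ₂.continuous_deriv le_rfl
  have hN := continuous_nonlocalTerm hk hσ₃.continuous
  have hN' := continuous_nonlocalTerm hk (continuous_deriv_left_of_contDiff hσ₃)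
  have hX' := continuous_deriv_right_of_contDiff hX
  have hflow : Continuous fun p : ℝ × ℝ ↦ (X p.1 p.2, p.1) := by fun_prop
  have hNX : Continuous (uncurry fun s z ↦ nonlocalTerm (deriv σ₂) (σ₃ · s) (X s z)) :=
    hN.comp hflow
  have hNX' : Continuous (uncurry fun s z ↦ nonlocalTerm (deriv σ₂) (deriv (σ₃ · s)) (X s z)) :=
    hN'.comp hflow
  refine hasDerivAt_of_hasDerivAt_left (A := fun t z ↦ σ₁ (X t z) t)
    (g := fun s z ↦ -(β / 2) * nonlocalTerm (deriv σ₂) (σ₃ · s) (X s z))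
    (g' := fun s z ↦ β / 2 * nonlocalTerm (deriv σ₂) (deriv (σ₃ · s)) (X s z) * deriv (X s) z)
    (fun z ↦ by fun_prop) ?_ (fun s hs z ↦ h.hasDerivAt_along_flow hσ₁ hs (hode s hs z))
    (fun z ↦ hNX.const_mul _ |>.comp (by fun_prop : Continuous fun s ↦ (s, z))) (by fun_prop)
    (fun s z ↦ ?_) ht
  · simpa only [hinit] using hasDerivAt_left_of_contDiff hσ₁ z 0
  · exact ((hasDerivAt_nonlocalTerm hk (periodic_deriv hσ₂per) (by fun_prop)
      (h.swap.periodic_fst s) (X s z)).comp z (hasDerivAt_right_of_contDiff hX s z)).const_mul _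
      |>.congr_deriv (by ring)

lemma abs_nonlocalTerm_deriv_le (h : IsClassicalSolution α β σ₂ T σ₁ σ₃)
    (hσ₂ : ContDiff ℝ 1 σ₂) (hσ₂per : Periodic σ₂ (1 / 2)) (hM : ∀ x, |deriv σ₂ x| ≤ M)
    (hσ₁ : ContDiff ℝ 1 (uncurry σ₁)) (hσ₃ : ContDiff ℝ 1 (uncurry σ₃)) (ht : t ∈ Icc 0 T)
    (x : ℝ) : |nonlocalTerm (deriv σ₂) (deriv (σ₃ · t)) x|
      ≤ M * ((periodL1Norm (deriv (σ₁ · 0)) + periodL1Norm (deriv (σ₃ · 0)))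
        * Real.exp (|β| / 2 * M * t)) := by
  have hM₀ : 0 ≤ M := (abs_nonneg _).trans (hM 0)
  refine (abs_nonlocalTerm_le hM ((show ContDiff ℝ 1 (σ₃ · t) by fun_prop).continuous_deriv le_rfl)
    (periodic_deriv (h.swap.periodic_fst t)) x).trans (mul_le_mul_of_nonneg_left ?_ hM₀)
  exact (le_add_of_nonneg_left (periodL1Norm_nonneg _)).trans
    (h.periodL1Norm_deriv_add_le hσ₂ hσ₂per hM hσ₁ hσ₃ ht)

end IsClassicalSolution

lemma abs_one_add_mul_integral_le_one {w : ℝ → ℝ} {a m t : ℝ} (hw : Continuous w) (ha : 0 ≤ a)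
    (ht : 0 ≤ t) (hat : a * (t * m) ≤ 2) (hbound : ∀ s ∈ Ico 0 t, w s ∈ Icc (-m) 0) :
    |1 + a * ∫ s in 0..t, w s| ≤ 1 := by
  have hupper : ∫ s in 0..t, w s ≤ ∫ _ in 0..t, (0 : ℝ) :=
    integral_mono_on_of_le_Ioo ht (hw.intervalIntegrable _ _) (by simp)
      fun s hs ↦ (hbound s (Ioo_subset_Ico_self hs)).2
  have hlower : ∫ _ in 0..t, -m ≤ ∫ s in 0..t, w s :=
    integral_mono_on_of_le_Ioo ht (by simp) (hw.intervalIntegrable _ _)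
      fun s hs ↦ (hbound s (Ioo_subset_Ico_self hs)).1
  simp only [intervalIntegral.integral_const, sub_zero, smul_eq_mul, mul_zero] at hupper hlower
  have hupper_mul := mul_nonpos_of_nonneg_of_nonpos ha hupper
  have hlower_mul := mul_le_mul_of_nonneg_left hlower ha
  rw [abs_le]
  constructor <;> linarith

lemma integral_mul_exp_mul (C K t : ℝ) :
    ∫ s in 0..t, K * (C * Real.exp (K * s)) = C * (Real.exp (K * t) - 1) := by
  have hderiv (s : ℝ) :
      HasDerivAt (fun s ↦ C * Real.exp (K * s)) (K * (C * Real.exp (K * s))) s :=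
    (((hasDerivAt_id s).const_mul K).exp.const_mul C).congr_deriv (by simp only [id]; ring)
  rw [integral_eq_sub_of_hasDerivAt (fun s _ ↦ hderiv s)
    ((by fun_prop : Continuous _).intervalIntegrable _ _)]
  simp only [mul_zero, Real.exp_zero, mul_one, mul_sub]

/-- As long as `w` stays in `[-m, 0]`, the Jacobian `J` stays in `[-1, 1]`, which in turn keeps
`w` within `r` of its initial value. -/
theorem abs_sub_lt_of_integral_eqs {w J G g : ℝ → ℝ} {a m r w₀ T : ℝ} (hw : Continuous w)
    (hg : Continuous g) (ha : 0 ≤ a) (haT : a * (T * m) ≤ 2) (hm : -m ≤ w₀ - r) (hr : w₀ + r ≤ 0)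
    (hJ : ∀ t ∈ Icc 0 T, J t = 1 + a * ∫ s in 0..t, w s)
    (hwG : ∀ t ∈ Icc 0 T, w t = w₀ + ∫ s in 0..t, G s * J s)
    (hG : ∀ t ∈ Icc 0 T, |G t| ≤ g t) (hgr : ∀ t ∈ Icc 0 T, ∫ s in 0..t, g s < r) :
    ∀ t ∈ Icc 0 T, |w t - w₀| < r := by
  refine forall_lt_of_forall_Ico_lt (by fun_prop) fun t ht hlt ↦ ?_
  have hbound : ∀ s ∈ Ico 0 t, w s ∈ Icc (-m) 0 := fun s hs ↦ by
    have := abs_lt.1 (hlt s hs)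
    constructor <;> linarith
  have hr₀ : 0 < r := by simpa using hgr 0 (left_mem_Icc.2 (ht.1.trans ht.2))
  have hm₀ : 0 ≤ m := by linarith
  have hJ_le : ∀ s ∈ Icc 0 t, |J s| ≤ 1 := fun s hs ↦ by
    have hsT : s ∈ Icc 0 T := ⟨hs.1, hs.2.trans ht.2⟩
    have hsm : a * (s * m) ≤ a * (T * m) := by gcongr; exact hsT.2
    rw [hJ s hsT]
    exact abs_one_add_mul_integral_le_one hw ha hs.1 (hsm.trans haT)
      fun u hu ↦ hbound u ⟨hu.1, hu.2.trans_le hs.2⟩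
  rw [hwG t ht, add_sub_cancel_left, ← Real.norm_eq_abs]
  refine (intervalIntegral.norm_integral_le_of_norm_le ht.1 (.of_forall fun s hs ↦ ?_)
    (hg.intervalIntegrable _ _)).trans_lt (hgr t ht)
  rw [norm_mul]
  exact (mul_le_of_le_one_right (norm_nonneg _) (hJ_le s (Ioc_subset_Icc_self hs))).trans
    (hG s ⟨hs.1.le, hs.2.trans ht.2⟩)

lemma exp_lt_of_div_lt {α β M MI T c : ℝ} (hα : 0 < α) (hβ : 0 < β) (hM : 0 ≤ M) (hMI : 0 < MI)
    (hc : 1 < c) (hcond : 3 / Real.log c * (β / α) < MI / M) (hT : T ≤ 6 / (α * MI)) :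
    Real.exp (β / 2 * M * T) < c := by
  have hlog := Real.log_pos hc
  have hM : 0 < M := hM.lt_of_ne' fun hM₀ ↦ by
    rw [hM₀, div_zero] at hcond
    exact hcond.not_ge (by positivity)
  rw [← Real.lt_log_iff_exp_lt (by positivity)]
  calc β / 2 * M * T ≤ β / 2 * M * (6 / (α * MI)) := by gcongr
    _ = 3 / Real.log c * (β / α) * (M / MI) * Real.log c := by field_simp; ring
    _ < MI / M * (M / MI) * Real.log c := by gcongr
    _ = Real.log c := by field_simp

theorem IsClassicalSolution.abs_deriv_comp_flow_sub_lt {α β : ℝ} {σ₂ : ℝ → ℝ} {T M m r z : ℝ}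
    {σ₁ σ₃ X : ℝ → ℝ → ℝ} (h : IsClassicalSolution α β σ₂ T σ₁ σ₃) (hα : 0 ≤ α)
    (hσ₂ : ContDiff ℝ 1 σ₂) (hσ₂per : Periodic σ₂ (1 / 2)) (hM : ∀ x, |deriv σ₂ x| ≤ M)
    (hσ₁ : ContDiff ℝ 1 (uncurry σ₁)) (hσ₃ : ContDiff ℝ 1 (uncurry σ₃))
    (hX : ContDiff ℝ 1 (uncurry X))
    (hode : ∀ s ∈ Ioo 0 T, ∀ z, HasDerivAt (X · z) (α * σ₁ (X s z) s) s) (hinit : ∀ z, X 0 z = z)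
    (hαT : α * (T * m) ≤ 2) (hm : -m ≤ deriv (σ₁ · 0) z - r) (hr : deriv (σ₁ · 0) z + r ≤ 0)
    (hV : (periodL1Norm (deriv (σ₁ · 0)) + periodL1Norm (deriv (σ₃ · 0)))
      * (Real.exp (|β| / 2 * M * T) - 1) < r) :
    ∀ t ∈ Icc 0 T, |deriv (fun z ↦ σ₁ (X t z) t) z - deriv (σ₁ · 0) z| < r := by
  set V := periodL1Norm (deriv (σ₁ · 0)) + periodL1Norm (deriv (σ₃ · 0))
  have hV₀ : 0 ≤ V := add_nonneg (periodL1Norm_nonneg _) (periodL1Norm_nonneg _)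
  have hM₀ : 0 ≤ M := (abs_nonneg _).trans (hM 0)
  have hσX : ContDiff ℝ 1 (uncurry fun z s ↦ σ₁ (X s z) s) := by fun_prop
  have hw : Continuous fun s ↦ deriv (fun z ↦ σ₁ (X s z) s) z :=
    (continuous_deriv_left_of_contDiff hσX).comp (by fun_prop : Continuous fun s ↦ (z, s))
  have hJ : ∀ t ∈ Icc 0 T, deriv (X t) z = 1 + α * ∫ s in 0..t, deriv (fun z ↦ σ₁ (X s z) s) z := by
    intro t ht
    have hflow := (hasDerivAt_flow (b := fun x t ↦ α * σ₁ x t) (by fun_prop) hX hode hinit ht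
      z).deriv
    simpa only [deriv_const_mul_field, intervalIntegral.integral_const_mul] using hflow
  refine abs_sub_lt_of_integral_eqs hw (g := fun s ↦ |β| / 2 * M * (V * Real.exp (|β| / 2 * M * s)))
    (by fun_prop) hα hαT hm hr hJ (fun t ht ↦ (h.hasDerivAt_comp_flow hσ₂ hσ₂per hσ₁ hσ₃ hX hode
      hinit ht z).deriv) (fun t ht ↦ ?_) fun t ht ↦ ?_
  · rw [abs_mul, abs_div, abs_two, mul_assoc (|β| / 2)]
    gcongr
    exact h.abs_nonlocalTerm_deriv_le hσ₂ hσ₂per hM hσ₁ hσ₃ ht _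
  · rw [integral_mul_exp_mul]
    exact lt_of_le_of_lt (by gcongr; exact ht.2) hV

theorem bootstrap_estimate_general
    (α β : ℝ) (hα : 0 < α) (hβ : 0 < β)
    (σ₂ : ℝ → ℝ) (hσ₂C1 : ContDiff ℝ 1 σ₂)
    (hσ₂per : ∀ x, σ₂ (x + 1 / 2) = σ₂ x)
    (ME : ℝ) (hME : IsGreatest ((fun x => |deriv σ₂ x|) '' Set.Icc 0 (1 / 2)) ME)
    (T : ℝ)
    (σ₁ σ₃ : ℝ → ℝ → ℝ)
    (h₁C1 : ContDiff ℝ 1 (fun p : ℝ × ℝ => σ₁ p.1 p.2))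
    (h₃C1 : ContDiff ℝ 1 (fun p : ℝ × ℝ => σ₃ p.1 p.2))
    (hsol : IsClassicalSolution α β σ₂ T σ₁ σ₃)
    (MI : ℝ)
    (hMI : MI = (∫ x in (0 : ℝ)..1, |deriv (fun y => σ₁ y 0) x|)
        + ∫ x in (0 : ℝ)..1, |deriv (fun y => σ₃ y 0) x|)
    (hMIpos : 0 < MI)
    (hcond : MI / ME > (3 / Real.log (13 / 12)) * (β / α))
    (hT : T ≤ 6 / (α * MI))
    (zstar : ℝ) (hzstar : deriv (fun y => σ₁ y 0) zstar = -(MI / 4))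
    (x₁ : ℝ → ℝ → ℝ)
    (hx₁C1 : ContDiff ℝ 1 (fun p : ℝ × ℝ => x₁ p.1 p.2))
    (hx₁ode : ∀ z : ℝ, ∀ t ∈ Set.Icc (0 : ℝ) T,
      HasDerivWithinAt (fun s => x₁ s z) (α * σ₁ (x₁ t z) t) (Set.Icc 0 T) t)
    (hx₁init : ∀ z : ℝ, x₁ 0 z = z) :
    ∀ t ∈ Set.Icc (0 : ℝ) T,
      -(MI / 3) < deriv (fun w => σ₁ (x₁ t w) t) zstar ∧
        deriv (fun w => σ₁ (x₁ t w) t) zstar < -(MI / 6) := by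
  intro t ht
  have hM (x : ℝ) : |deriv σ₂ x| ≤ ME := by
    obtain ⟨y, hy, hxy⟩ := (periodic_deriv hσ₂per).exists_mem_Ico₀ one_half_pos x
    exact hxy ▸ hME.2 ⟨y, Ico_subset_Icc_self hy, rfl⟩
  have hexp : Real.exp (|β| / 2 * ME * T) < 13 / 12 := by
    rw [abs_of_pos hβ]
    exact exp_lt_of_div_lt hα hβ ((abs_nonneg _).trans (hM 0)) hMIpos (by norm_num) hcond hT
  have hV : MI * (Real.exp (|β| / 2 * ME * T) - 1) < MI / 12 := by
    linarith [mul_lt_mul_of_pos_left hexp hMIpos]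
  have hαT : α * (T * (MI / 3)) ≤ 2 := by
    rw [le_div_iff₀ (by positivity)] at hT
    linarith
  have hclose := hsol.abs_deriv_comp_flow_sub_lt (m := MI / 3) (r := MI / 12) (z := zstar) hα.le
    hσ₂C1 hσ₂per hM h₁C1 h₃C1 hx₁C1
    (fun s hs z ↦ (hx₁ode z s (Ioo_subset_Icc_self hs)).hasDerivAt (Icc_mem_nhds hs.1 hs.2))
    hx₁init hαT (by linarith) (by linarith) (hMI ▸ hV) t ht
  rw [hzstar, abs_lt] at hclose
  constructor <;> linarith

/-- the bootstrap estimate.  Under the strong-sound-wave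
condition, along the 1-characteristic flow issued from a point `z*` where
`∂ₓσ₁(z*,0) = -M_I/4`, the quantity `∂_z[σ₁(x₁(t;z*),t)]` stays in
`(-M_I/3, -M_I/6)` for all `t ∈ [0,T]` with `T ≤ 6/(α M_I)`. -/
theorem bootstrap_estimate
    (α β : ℝ) (hα : 0 < α) (hβ : 0 < β)
    (σ₂ : ℝ → ℝ) (hσ₂C1 : ContDiff ℝ 1 σ₂)
    (hσ₂per : ∀ x, σ₂ (x + 1 / 2) = σ₂ x)
    (ME : ℝ) (hME : IsGreatest ((fun x => |deriv σ₂ x|) '' Set.Icc 0 (1 / 2)) ME)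
    (T : ℝ) (hT0 : 0 ≤ T)
    (σ₁ σ₃ : ℝ → ℝ → ℝ)
    (h₁C2 : ContDiff ℝ 2 (fun p : ℝ × ℝ => σ₁ p.1 p.2))
    (h₃C2 : ContDiff ℝ 2 (fun p : ℝ × ℝ => σ₃ p.1 p.2))
    (hsol : IsClassicalSolution α β σ₂ T σ₁ σ₃)
    (MI : ℝ)
    (hMI : MI = (∫ x in (0 : ℝ)..1, |deriv (fun y => σ₁ y 0) x|)
        + ∫ x in (0 : ℝ)..1, |deriv (fun y => σ₃ y 0) x|)
    (hMIpos : 0 < MI)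
    (hcond : MI / ME > (3 / Real.log (13 / 12)) * (β / α))
    (hT : T ≤ 6 / (α * MI))
    (zstar : ℝ) (hzstar : deriv (fun y => σ₁ y 0) zstar = -(MI / 4))
    (x₁ : ℝ → ℝ → ℝ)
    (hx₁C1 : ContDiff ℝ 1 (fun p : ℝ × ℝ => x₁ p.1 p.2))
    (hx₁ode : ∀ z : ℝ, ∀ t ∈ Set.Icc (0 : ℝ) T,
      HasDerivWithinAt (fun s => x₁ s z) (α * σ₁ (x₁ t z) t) (Set.Icc 0 T) t)
    (hx₁init : ∀ z : ℝ, x₁ 0 z = z) :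
    ∀ t ∈ Set.Icc (0 : ℝ) T,
      -(MI / 3) < deriv (fun w => σ₁ (x₁ t w) t) zstar ∧
        deriv (fun w => σ₁ (x₁ t w) t) zstar < -(MI / 6) :=
  bootstrap_estimate_general α β hα hβ σ₂ hσ₂C1 hσ₂per ME hME T σ₁ σ₃ (h₁C2.of_le one_le_two)
    (h₃C2.of_le one_le_two) hsol MI hMI hMIpos hcond hT zstar hzstar x₁ hx₁C1 hx₁ode hx₁init
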